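/- arXiv:2407.04148 — 3 statements merged into one kernel-verified Lean document; each statement's English description precedes it below -/
import Mathlib

section
/- In the notation of the context, set β = β₂/β₁, λ₁ = (a_d²−a_s²)/((a_d²−1)·√β₂), and λ₂ = (a_d²−a_s²)/((a_s²−1)·√β₁). Then for every fixed σ ∈ ℝ: G₁(σ+iτ)·β^{−(σ+iτ)/2} → iλ₁ as τ → +∞ and → −iλ₁ as τ → −∞; and G₂(σ+iτ)·β^{(σ+iτ)/2} → iλ₂ as τ → +∞ and → −iλ₂ as τ → −∞. -/
open MeasureTheory Filter Set Complex

noncomputable section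

/-- a_d = c_d / V -/
def aD (cd V : ℝ) : ℝ := cd / V

/-- a_s = c_s / V -/
def aS (cs V : ℝ) : ℝ := cs / V

/-- β₁ = a_s² / (a_d² − 1) -/
def beta1 (cd cs V : ℝ) : ℝ := (aS cs V) ^ 2 / ((aD cd V) ^ 2 - 1)

/-- β₂ = a_d² / (a_s² − 1) -/
def beta2 (cd cs V : ℝ) : ℝ := (aD cd V) ^ 2 / ((aS cs V) ^ 2 - 1)

/-- b₁(s) = [(a_d²−a_s²)(s−1)−ν a_s²] / (2(a_d²−1) β₂^{(1−s)/2} β₁^{s/2}) -/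
def bb1 (nu cd cs V : ℝ) (s : ℂ) : ℂ :=
  ((((aD cd V) ^ 2 - (aS cs V) ^ 2 : ℝ) : ℂ) * (s - 1) - (nu : ℂ) * (((aS cs V) ^ 2 : ℝ) : ℂ)) /
    (2 * ((((aD cd V) ^ 2 - 1 : ℝ)) : ℂ) * ((beta2 cd cs V : ℝ) : ℂ) ^ ((1 - s) / 2)
      * ((beta1 cd cs V : ℝ) : ℂ) ^ (s / 2))

/-- b₂(s) = [(a_d²−a_s²)(s−1)−ν(a_d²−2a_s²)] / (2(a_s²−1) β₁^{(1−s)/2} β₂^{s/2}) -/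
def bb2 (nu cd cs V : ℝ) (s : ℂ) : ℂ :=
  ((((aD cd V) ^ 2 - (aS cs V) ^ 2 : ℝ) : ℂ) * (s - 1)
      - (nu : ℂ) * (((aD cd V) ^ 2 - 2 * (aS cs V) ^ 2 : ℝ) : ℂ)) /
    (2 * ((((aS cs V) ^ 2 - 1 : ℝ)) : ℂ) * ((beta1 cd cs V : ℝ) : ℂ) ^ ((1 - s) / 2)
      * ((beta2 cd cs V : ℝ) : ℂ) ^ (s / 2))

/-- G₁(s) = b₁(s)·Γ(1−s/2)Γ((s−ν)/2) / (Γ((s+1−ν)/2)Γ((3−s)/2)) -/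
def GG1 (nu cd cs V : ℝ) (s : ℂ) : ℂ :=
  bb1 nu cd cs V s * (Complex.Gamma (1 - s / 2) * Complex.Gamma ((s - (nu : ℂ)) / 2)) /
    (Complex.Gamma ((s + 1 - (nu : ℂ)) / 2) * Complex.Gamma ((3 - s) / 2))

/-- G₂(s) = b₂(s)·Γ(1−s/2)Γ((s−ν)/2) / (Γ((s+1−ν)/2)Γ((3−s)/2)) -/
def GG2 (nu cd cs V : ℝ) (s : ℂ) : ℂ :=
  bb2 nu cd cs V s * (Complex.Gamma (1 - s / 2) * Complex.Gamma ((s - (nu : ℂ)) / 2)) /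
    (Complex.Gamma ((s + 1 - (nu : ℂ)) / 2) * Complex.Gamma ((3 - s) / 2))

/-!
With `u = s / 2`, the reflection formula turns `Γ(1 - u) / Γ(3/2 - u)` into
`-cot(π u) Γ(u - 1/2) / Γ(u)`. The factor `s - 1` contributed by `b₁` and `b₂` then raises
`Γ(u - 1/2)` to `Γ(u + 1/2)`, so that what remains besides the cotangent is a cross-ratio
`Γ(u + a) Γ(u + b) / (Γ(u) Γ(u + a + b))`. By Gauss's product this is
`∏ (1 - a b / ((u + a + j) (u + b + j)))`, which tends to `1` as `|Im u| → ∞` because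
`∑ 1 / |u + n|²` tends to `0`; no asymptotics of a single value of `Γ` is needed. The limits `± i`
come from the cotangent alone. All limits are uniform in `Re s`: they hold along `comap im atTop`
and `comap im atBot`.
-/

open Bornology Topology

lemma eventually_im_ne_zero : ∀ᶠ z in comap im (cobounded ℝ), z.im ≠ 0 :=
  tendsto_comap.eventually_ne_cobounded 0

lemma comap_im_cobounded_le_cobounded : comap im (cobounded ℝ) ≤ cobounded ℂ :=
  imCLM.lipschitz.comap_cobounded_le

lemma tendsto_add_const_comap_im_cobounded (a : ℂ) :
    Tendsto (· + a) (comap im (cobounded ℝ)) (comap im (cobounded ℝ)) :=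
  tendsto_comap_iff.mpr <| (tendsto_add_const_cobounded a.im).comp tendsto_comap

lemma tendsto_ofReal_mul_comap_im {r : ℝ} {l l' : Filter ℝ} (h : Tendsto (r * ·) l l') :
    Tendsto (fun z : ℂ => r * z) (comap im l) (comap im l') := by
  simpa [tendsto_comap_iff, Function.comp_def] using h.comp tendsto_comap

lemma tendsto_div_two_comap_im_cobounded :
    Tendsto (fun z : ℂ => z / 2) (comap im (cobounded ℝ)) (comap im (cobounded ℝ)) := by
  simpa [div_eq_inv_mul] using
    tendsto_ofReal_mul_comap_im (tendsto_mul_left_cobounded (inv_ne_zero (two_ne_zero' ℝ)))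

/-- The sum of `1 / |z + n|²` over all integers `n`. Summing over `ℤ` rather than over the poles of
`Γ` makes it `1`-periodic, so that its decay as `|Im z| → ∞` is uniform in `Re z`. -/
def invNormSqSum (z : ℂ) : ℝ := ∑' n : ℤ, (‖z + n‖ ^ 2)⁻¹

lemma summable_inv_normSq_add_int (z : ℂ) : Summable fun n : ℤ => (‖z + n‖ ^ 2)⁻¹ := by
  simpa using (EisensteinSeries.linear_right_summable z 1 le_rfl).norm

lemma invNormSqSum_add_int (z : ℂ) (m : ℤ) : invNormSqSum (z + m) = invNormSqSum z := by
  simpa [invNormSqSum, add_assoc] using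
    (Equiv.addLeft m).tsum_eq fun n : ℤ => (‖z + n‖ ^ 2)⁻¹

lemma sum_range_inv_normSq_le_invNormSqSum (z : ℂ) (n : ℕ) :
    ∑ j ∈ Finset.range n, (‖z + j‖ ^ 2)⁻¹ ≤ invNormSqSum z := by
  simpa [invNormSqSum] using (summable_inv_normSq_add_int z).sum_le_tsum
    ((Finset.range n).map Nat.castEmbedding) fun _ _ => by positivity

lemma inv_normSq_add_int_le {z : ℂ} (hre : z.re ∈ Ico 0 1) (him : 1 ≤ |z.im|) (n : ℤ) :
    (‖z + n‖ ^ 2)⁻¹ ≤ 3 * ((n : ℝ) ^ 2 + 1)⁻¹ := by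
  have him2 : 1 ≤ z.im ^ 2 := (one_le_sq_iff_one_le_abs _).mpr him
  have hnorm : ‖z + n‖ ^ 2 = (z.re + n) ^ 2 + z.im ^ 2 := by
    rw [Complex.sq_norm, normSq_apply]
    simp only [add_re, add_im, intCast_re, intCast_im, add_zero]
    ring
  rw [hnorm, inv_le_comm₀ (by positivity) (by positivity), mul_inv, inv_inv]
  nlinarith [sq_nonneg (2 * z.re + n), mul_nonneg hre.1 (sub_nonneg.mpr hre.2.le)]

lemma tendsto_invNormSqSum :
    Tendsto invNormSqSum (comap im (cobounded ℝ)) (𝓝 0) := by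
  set l : Filter ℂ := comap im (cobounded ℝ)
  let reduce (z : ℂ) : ℂ := z + (-⌊z.re⌋ : ℤ)
  have re_reduce (z : ℂ) : (reduce z).re ∈ Ico 0 1 := by
    simpa [reduce, ← sub_eq_add_neg] using And.intro (Int.fract_nonneg z.re) (Int.fract_lt_one z.re)
  have im_reduce (z : ℂ) : (reduce z).im = z.im := by simp [reduce]
  have summable_bound : Summable fun n : ℤ => 3 * ((n : ℝ) ^ 2 + 1)⁻¹ := by
    simpa [Complex.sq_norm, normSq_apply, ← sq, add_comm] using
      (summable_inv_normSq_add_int I).mul_left 3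
  have abs_im : Tendsto (fun z : ℂ => |z.im|) l atTop :=
    tendsto_norm_cobounded_atTop.comp tendsto_comap
  have tendsto_term (n : ℤ) : Tendsto (fun z => (‖reduce z + n‖ ^ 2)⁻¹) l (𝓝 0) := by
    refine tendsto_inv_atTop_zero.comp ((tendsto_pow_atTop two_ne_zero).comp ?_)
    refine tendsto_atTop_mono (fun z => ?_) abs_im
    simpa [im_reduce] using abs_im_le_norm (reduce z + n)
  have term_le : ∀ᶠ z in l, ∀ n : ℤ, ‖(‖reduce z + n‖ ^ 2)⁻¹‖ ≤ 3 * ((n : ℝ) ^ 2 + 1)⁻¹ := by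
    filter_upwards [abs_im.eventually_ge_atTop 1] with z hz n
    rw [Real.norm_of_nonneg (by positivity)]
    exact inv_normSq_add_int_le (re_reduce z) (by rwa [im_reduce]) n
  have h := tendsto_tsum_of_dominated_convergence summable_bound tendsto_term term_le
  rw [tsum_zero] at h
  exact h.congr fun z => invNormSqSum_add_int z _

lemma Gamma_ne_zero_of_im_ne_zero {z : ℂ} (hz : z.im ≠ 0) : Gamma z ≠ 0 :=
  Complex.Gamma_ne_zero fun m h => hz (by simp [h])

/-- The cross-ratio of values of `Γ` at the parallelogram `z, z + a, z + b, z + a + b`: the powers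
of `n` and the factorials in Gauss's product for `Γ` cancel in it. -/
def gammaCrossRatio (a b z : ℂ) : ℂ :=
  Gamma (z + a) * Gamma (z + b) / (Gamma z * Gamma (z + a + b))

lemma GammaSeq_crossRatio_eq_prod (a b z : ℂ) {n : ℕ} (hn : n ≠ 0) :
    GammaSeq (z + a) n * GammaSeq (z + b) n / (GammaSeq z n * GammaSeq (z + a + b) n) =
      ∏ j ∈ Finset.range (n + 1), (z + j) * (z + a + b + j) / ((z + a + j) * (z + b + j)) := by
  have hn' : (n : ℂ) ≠ 0 := Nat.cast_ne_zero.mpr hn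
  have hfact : (n.factorial : ℂ) ≠ 0 := Nat.cast_ne_zero.mpr n.factorial_ne_zero
  have hpow (s : ℂ) : (n : ℂ) ^ s ≠ 0 := by simp [cpow_eq_zero_iff, hn']
  have hpow_mul : (n : ℂ) ^ (z + a) * n ^ (z + b) = n ^ z * n ^ (z + a + b) := by
    rw [← cpow_add _ _ hn', ← cpow_add _ _ hn']
    congr 1
    ring
  simp only [GammaSeq, Finset.prod_div_distrib, Finset.prod_mul_distrib]
  rw [div_mul_div_comm, div_mul_div_comm, div_div_div_eq, mul_mul_mul_comm ((n : ℂ) ^ (z + a)),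
    mul_mul_mul_comm ((n : ℂ) ^ z), hpow_mul, mul_comm (_ * _ * (_ * _)),
    mul_div_mul_right _ _ (mul_ne_zero (mul_ne_zero (hpow _) (hpow _)) (mul_ne_zero hfact hfact))]

lemma mul_div_eq_one_add_neg_div {a b w : ℂ} (ha : w + a ≠ 0) (hb : w + b ≠ 0) :
    w * (w + a + b) / ((w + a) * (w + b)) = 1 + -(a * b) / ((w + a) * (w + b)) := by
  field_simp
  ring

lemma norm_div_mul_le_mul_add_inv_sq (c u v : ℂ) :
    ‖c / (u * v)‖ ≤ ‖c‖ * ((‖u‖ ^ 2)⁻¹ + (‖v‖ ^ 2)⁻¹) := by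
  rw [norm_div, norm_mul, div_eq_mul_inv, mul_inv, ← inv_pow, ← inv_pow]
  gcongr
  nlinarith [sq_nonneg (‖u‖⁻¹ - ‖v‖⁻¹), sq_nonneg (‖u‖⁻¹ + ‖v‖⁻¹)]

lemma norm_GammaSeq_crossRatio_sub_one_le {a b z : ℂ} (ha : (z + a).im ≠ 0) (hb : (z + b).im ≠ 0)
    {n : ℕ} (hn : n ≠ 0) :
    ‖GammaSeq (z + a) n * GammaSeq (z + b) n / (GammaSeq z n * GammaSeq (z + a + b) n) - 1‖ ≤
      Real.exp (‖a * b‖ * (invNormSqSum (z + a) + invNormSqSum (z + b))) - 1 := by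
  have add_nat_ne_zero {w : ℂ} (hw : w.im ≠ 0) (j : ℕ) : w + j ≠ 0 :=
    fun h => hw (by simpa using congrArg im h)
  have factor_eq (j : ℕ) : (z + j) * (z + a + b + j) / ((z + a + j) * (z + b + j)) =
      1 + -(a * b) / ((z + a + j) * (z + b + j)) := by
    have h := mul_div_eq_one_add_neg_div (a := a) (b := b) (w := z + j)
      (by simpa [add_right_comm] using add_nat_ne_zero ha j)
      (by simpa [add_right_comm] using add_nat_ne_zero hb j)
    simpa only [add_right_comm _ (j : ℂ)] using h
  simp only [GammaSeq_crossRatio_eq_prod a b z hn, factor_eq]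
  refine (Finset.norm_prod_one_add_sub_one_le _ _).trans ?_
  gcongr
  calc ∑ j ∈ Finset.range (n + 1), ‖-(a * b) / ((z + a + j) * (z + b + j))‖
      ≤ ∑ j ∈ Finset.range (n + 1), ‖a * b‖ * ((‖z + a + j‖ ^ 2)⁻¹ + (‖z + b + j‖ ^ 2)⁻¹) :=
        Finset.sum_le_sum fun j _ => norm_neg (a * b) ▸ norm_div_mul_le_mul_add_inv_sq _ _ _
    _ = ‖a * b‖ * (∑ j ∈ Finset.range (n + 1), (‖z + a + j‖ ^ 2)⁻¹ +
          ∑ j ∈ Finset.range (n + 1), (‖z + b + j‖ ^ 2)⁻¹) := by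
        rw [← Finset.mul_sum, Finset.sum_add_distrib]
    _ ≤ ‖a * b‖ * (invNormSqSum (z + a) + invNormSqSum (z + b)) := by
        gcongr <;> exact sum_range_inv_normSq_le_invNormSqSum _ _

lemma norm_gammaCrossRatio_sub_one_le {a b z : ℂ} (hz : z.im ≠ 0) (ha : (z + a).im ≠ 0)
    (hb : (z + b).im ≠ 0) (hab : (z + a + b).im ≠ 0) :
    ‖gammaCrossRatio a b z - 1‖ ≤
      Real.exp (‖a * b‖ * (invNormSqSum (z + a) + invNormSqSum (z + b))) - 1 := by
  have hlim : Tendsto (fun n => GammaSeq (z + a) n * GammaSeq (z + b) n /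
      (GammaSeq z n * GammaSeq (z + a + b) n)) atTop (𝓝 (gammaCrossRatio a b z)) :=
    ((GammaSeq_tendsto_Gamma _).mul (GammaSeq_tendsto_Gamma _)).div
      ((GammaSeq_tendsto_Gamma _).mul (GammaSeq_tendsto_Gamma _))
      (mul_ne_zero (Gamma_ne_zero_of_im_ne_zero hz) (Gamma_ne_zero_of_im_ne_zero hab))
  refine le_of_tendsto (hlim.sub_const 1).norm ?_
  filter_upwards [eventually_ne_atTop 0] with n hn
  exact norm_GammaSeq_crossRatio_sub_one_le ha hb hn

theorem tendsto_gammaCrossRatio (a b : ℂ) :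
    Tendsto (gammaCrossRatio a b) (comap im (cobounded ℝ)) (𝓝 1) := by
  have tendsto_shift (c : ℂ) :
      Tendsto (fun z => invNormSqSum (z + c)) (comap im (cobounded ℝ)) (𝓝 0) :=
    tendsto_invNormSqSum.comp (tendsto_add_const_comap_im_cobounded c)
  have tendsto_bound : Tendsto (fun z => Real.exp (‖a * b‖ *
      (invNormSqSum (z + a) + invNormSqSum (z + b))) - 1) (comap im (cobounded ℝ)) (𝓝 0) := by
    simpa using (((tendsto_shift a).add (tendsto_shift b)).const_mul ‖a * b‖).rexp.sub_const 1
  have hne (c : ℂ) : ∀ᶠ z in comap im (cobounded ℝ), (z + c).im ≠ 0 :=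
    (tendsto_add_const_comap_im_cobounded c).eventually eventually_im_ne_zero
  rw [tendsto_iff_norm_sub_tendsto_zero]
  refine squeeze_zero' (.of_forall fun _ => norm_nonneg _) ?_ tendsto_bound
  filter_upwards [eventually_im_ne_zero, hne a, hne b, hne (a + b)] with z hz ha hb hab
  exact norm_gammaCrossRatio_sub_one_le hz ha hb (by rwa [add_assoc])

lemma tendsto_cot_comap_im_atTop : Tendsto cot (comap im atTop) (𝓝 (-I)) := by
  have hexp : Tendsto (fun z => exp (2 * I * z)) (comap im atTop) (𝓝 0) := by
    rw [tendsto_exp_nhds_zero_iff]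
    simpa using tendsto_comap.const_mul_atTop_of_neg (r := (-2 : ℝ)) (by norm_num)
  have h := (hexp.add_const 1).div ((hexp.const_sub 1).const_mul I) (by simp)
  simp only [zero_add, sub_zero, mul_one, one_div, inv_I] at h
  exact h.congr fun z => (cot_eq_exp_ratio z).symm

lemma tendsto_cot_comap_im_atBot : Tendsto cot (comap im atBot) (𝓝 I) := by
  have hconj : Tendsto (starRingEnd ℂ) (comap im atBot) (comap im atTop) := by
    simpa [tendsto_comap_iff, Function.comp_def] using
      (tendsto_neg_atBot_atTop (G := ℝ)).comp tendsto_comap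
  have h := (continuous_conj.tendsto _).comp (tendsto_cot_comap_im_atTop.comp hconj)
  simpa [Function.comp_def, cot_conj] using h

lemma Gamma_one_sub_div_Gamma_three_halves_sub {u : ℂ} (hu : Gamma u ≠ 0)
    (hu' : Gamma (u - 1 / 2) ≠ 0) :
    Gamma (1 - u) / Gamma (3 / 2 - u) = -cot (Real.pi * u) * Gamma (u - 1 / 2) / Gamma u := by
  have hsin : Gamma (1 - u) = Real.pi / sin (Real.pi * u) / Gamma u :=
    eq_div_of_mul_eq hu (by rw [mul_comm, Complex.Gamma_mul_Gamma_one_sub])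
  have hcos : Gamma (3 / 2 - u) = -(Real.pi / cos (Real.pi * u)) / Gamma (u - 1 / 2) := by
    have h := Complex.Gamma_mul_Gamma_one_sub (u - 1 / 2)
    rw [mul_sub, mul_one_div, sin_sub_pi_div_two, div_neg] at h
    refine eq_div_of_mul_eq hu' ?_
    rw [mul_comm, ← h]
    congr 2
    ring
  have hpi : (Real.pi : ℂ) ≠ 0 := by exact_mod_cast Real.pi_ne_zero
  rw [hsin, hcos, cot]
  field_simp

/-- The quotient of four values of `Γ` by which `b_j (s)` is multiplied in `G_j (s)`. -/
def gammaQuotient (ν s : ℂ) : ℂ :=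
  Gamma (1 - s / 2) * Gamma ((s - ν) / 2) / (Gamma ((s + 1 - ν) / 2) * Gamma ((3 - s) / 2))

lemma sub_one_mul_gammaQuotient (ν : ℂ) {s : ℂ} (hs : s.im ≠ 0) :
    (s - 1) * gammaQuotient ν s =
      -2 * cot ((Real.pi / 2 : ℝ) * s) * gammaCrossRatio (1 / 2) (-ν / 2) (s / 2) := by
  have hu : Gamma (s / 2) ≠ 0 := Gamma_ne_zero_of_im_ne_zero (by simpa using hs)
  have him : (s / 2 - 1 / 2).im ≠ 0 := by simpa using hs
  have hne : s / 2 - 1 / 2 ≠ 0 := fun h => him (by rw [h, zero_im])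
  have hreflect :=
    Gamma_one_sub_div_Gamma_three_halves_sub hu (Gamma_ne_zero_of_im_ne_zero him)
  have hrec : Gamma (s / 2 + 1 / 2) = (s / 2 - 1 / 2) * Gamma (s / 2 - 1 / 2) := by
    rw [← Complex.Gamma_add_one _ hne]
    congr 1
    ring
  calc (s - 1) * gammaQuotient ν s
      = (s - 1) * (Gamma (1 - s / 2) / Gamma (3 / 2 - s / 2)) *
          (Gamma (s / 2 + -ν / 2) / Gamma (s / 2 + 1 / 2 + -ν / 2)) := by
        rw [gammaQuotient]
        ring_nf
    _ = -2 * cot ((Real.pi / 2 : ℝ) * s) * gammaCrossRatio (1 / 2) (-ν / 2) (s / 2) := by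
        rw [hreflect, gammaCrossRatio, hrec, ofReal_div, ofReal_ofNat, div_mul_eq_mul_div,
          mul_div_assoc (Real.pi : ℂ)]
        ring

lemma tendsto_affine_mul_gammaQuotient {l : Filter ℂ} (hl : l ≤ comap im (cobounded ℝ)) {c : ℂ}
    (hc : Tendsto (fun s => cot ((Real.pi / 2 : ℝ) * s)) l (𝓝 c)) (A B ν : ℂ) :
    Tendsto (fun s => (A * (s - 1) - B) * gammaQuotient ν s) l (𝓝 (A * (-2 * c))) := by
  have hratio : Tendsto (fun s => gammaCrossRatio (1 / 2) (-ν / 2) (s / 2)) l (𝓝 1) :=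
    ((tendsto_gammaCrossRatio _ _).comp tendsto_div_two_comap_im_cobounded).mono_left hl
  have hinv : Tendsto (fun s : ℂ => (s - 1)⁻¹) l (𝓝 0) :=
    (tendsto_inv₀_cobounded.comp (tendsto_sub_const_cobounded 1)).mono_left
      (hl.trans comap_im_cobounded_le_cobounded)
  have h := ((hinv.const_mul B).const_sub A).mul ((hc.const_mul (-2)).mul hratio)
  simp only [mul_zero, sub_zero, mul_one] at h
  refine h.congr' ?_
  filter_upwards [hl eventually_im_ne_zero] with s hs
  have hs1 : s - 1 ≠ 0 := fun h => hs (by simpa using congrArg im h)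
  rw [← sub_one_mul_gammaQuotient ν hs]
  field_simp

lemma ofReal_div_cpow_neg_half {p q : ℝ} (hp : 0 ≤ p) (hq : 0 < q) (s : ℂ) :
    ((q / p : ℝ) : ℂ) ^ (-(s / 2)) =
      (q : ℂ) ^ ((1 - s) / 2) * (p : ℂ) ^ (s / 2) / (Real.sqrt q : ℂ) := by
  have hq' : (q : ℂ) ≠ 0 := ofReal_ne_zero.mpr hq.ne'
  have hsqrt : (Real.sqrt q : ℂ) = (q : ℂ) ^ (1 / 2 : ℂ) := by
    rw [Real.sqrt_eq_rpow, ofReal_cpow hq.le]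
    norm_num
  rw [hsqrt, mul_div_right_comm, ← cpow_sub _ _ hq', ofReal_div,
    div_cpow_ofReal_nonneg hq.le hp, cpow_neg, cpow_neg (p : ℂ), div_inv_eq_mul, ← cpow_neg]
  ring_nf

/-- The shape shared by `G₁ (s)`, with `p = β₁`, `q = β₂`, `D = a_d² - 1`, and `G₂ (s)`, with
`p = β₂`, `q = β₁`, `D = a_s² - 1`; the numerator of `b_j (s)` is `A (s - 1) - B`. -/
def gammaSymbol (p q D A : ℝ) (B ν s : ℂ) : ℂ :=
  (A * (s - 1) - B) / (2 * D * (q : ℂ) ^ ((1 - s) / 2) * (p : ℂ) ^ (s / 2)) *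
      (Gamma (1 - s / 2) * Gamma ((s - ν) / 2)) /
    (Gamma ((s + 1 - ν) / 2) * Gamma ((3 - s) / 2))

lemma gammaSymbol_mul_cpow {p q : ℝ} (hp : 0 < p) (hq : 0 < q) (D A : ℝ) (B ν s : ℂ) :
    gammaSymbol p q D A B ν s * ((q / p : ℝ) : ℂ) ^ (-(s / 2)) =
      (A * (s - 1) - B) * gammaQuotient ν s / (2 * D * (Real.sqrt q : ℂ)) := by
  have hppow : (p : ℂ) ^ (s / 2) ≠ 0 := by simp [cpow_eq_zero_iff, hp.ne']
  have hqpow : (q : ℂ) ^ ((1 - s) / 2) ≠ 0 := by simp [cpow_eq_zero_iff, hq.ne']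
  rw [ofReal_div_cpow_neg_half hp.le hq, gammaSymbol, gammaQuotient]
  field_simp

lemma tendsto_gammaSymbol_mul_cpow {l : Filter ℂ} (hl : l ≤ comap im (cobounded ℝ)) {c : ℂ}
    (hc : Tendsto (fun s => cot ((Real.pi / 2 : ℝ) * s)) l (𝓝 c))
    {p q : ℝ} (hp : 0 < p) (hq : 0 < q) (D A : ℝ) (B ν : ℂ) :
    Tendsto (fun s => gammaSymbol p q D A B ν s * ((q / p : ℝ) : ℂ) ^ (-(s / 2))) l
      (𝓝 (-c * (A / (D * Real.sqrt q) : ℝ))) := by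
  have h := (tendsto_affine_mul_gammaQuotient hl hc A B ν).div_const (2 * D * (Real.sqrt q : ℂ))
  have hlim : A * (-2 * c) / (2 * D * (Real.sqrt q : ℂ)) = -c * (A / (D * Real.sqrt q) : ℝ) := by
    push_cast
    ring
  simpa only [gammaSymbol_mul_cpow hp hq, hlim] using h

lemma tendsto_GG1_mul_cpow {l : Filter ℂ} (hl : l ≤ comap im (cobounded ℝ)) {c : ℂ}
    (hc : Tendsto (fun s => cot ((Real.pi / 2 : ℝ) * s)) l (𝓝 c)) (nu : ℝ) {cd cs V : ℝ}
    (h₁ : 0 < beta1 cd cs V) (h₂ : 0 < beta2 cd cs V) :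
    Tendsto (fun s => GG1 nu cd cs V s * ((beta2 cd cs V / beta1 cd cs V : ℝ) : ℂ) ^ (-(s / 2))) l
      (𝓝 (-c * ((aD cd V ^ 2 - aS cs V ^ 2) /
        ((aD cd V ^ 2 - 1) * Real.sqrt (beta2 cd cs V)) : ℝ))) :=
  tendsto_gammaSymbol_mul_cpow hl hc h₁ h₂ _ _ _ _

lemma tendsto_GG2_mul_cpow {l : Filter ℂ} (hl : l ≤ comap im (cobounded ℝ)) {c : ℂ}
    (hc : Tendsto (fun s => cot ((Real.pi / 2 : ℝ) * s)) l (𝓝 c)) (nu : ℝ) {cd cs V : ℝ}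
    (h₁ : 0 < beta1 cd cs V) (h₂ : 0 < beta2 cd cs V) :
    Tendsto (fun s => GG2 nu cd cs V s * ((beta2 cd cs V / beta1 cd cs V : ℝ) : ℂ) ^ (s / 2)) l
      (𝓝 (-c * ((aD cd V ^ 2 - aS cs V ^ 2) /
        ((aS cs V ^ 2 - 1) * Real.sqrt (beta1 cd cs V)) : ℝ))) := by
  have cpow_swap (s : ℂ) : ((beta2 cd cs V / beta1 cd cs V : ℝ) : ℂ) ^ (s / 2) =
      ((beta1 cd cs V / beta2 cd cs V : ℝ) : ℂ) ^ (-(s / 2)) := by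
    rw [← inv_div, ofReal_inv, inv_cpow_ofReal_nonneg (div_pos h₁ h₂).le, cpow_neg]
  simp only [cpow_swap]
  exact tendsto_gammaSymbol_mul_cpow hl hc h₂ h₁ _ _ _ _

theorem G_oscillation_asymptotics_general (nu : ℝ) {cd cs V : ℝ} (hd : 1 < aD cd V ^ 2)
    (hs : 1 < aS cs V ^ 2) :
    Tendsto (fun s => GG1 nu cd cs V s * ((beta2 cd cs V / beta1 cd cs V : ℝ) : ℂ) ^ (-(s / 2)))
      (comap im atTop) (𝓝 (I * ((aD cd V ^ 2 - aS cs V ^ 2) /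
        ((aD cd V ^ 2 - 1) * Real.sqrt (beta2 cd cs V)) : ℝ))) ∧
    Tendsto (fun s => GG1 nu cd cs V s * ((beta2 cd cs V / beta1 cd cs V : ℝ) : ℂ) ^ (-(s / 2)))
      (comap im atBot) (𝓝 (-(I * ((aD cd V ^ 2 - aS cs V ^ 2) /
        ((aD cd V ^ 2 - 1) * Real.sqrt (beta2 cd cs V)) : ℝ)))) ∧
    Tendsto (fun s => GG2 nu cd cs V s * ((beta2 cd cs V / beta1 cd cs V : ℝ) : ℂ) ^ (s / 2))
      (comap im atTop) (𝓝 (I * ((aD cd V ^ 2 - aS cs V ^ 2) /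
        ((aS cs V ^ 2 - 1) * Real.sqrt (beta1 cd cs V)) : ℝ))) ∧
    Tendsto (fun s => GG2 nu cd cs V s * ((beta2 cd cs V / beta1 cd cs V : ℝ) : ℂ) ^ (s / 2))
      (comap im atBot) (𝓝 (-(I * ((aD cd V ^ 2 - aS cs V ^ 2) /
        ((aS cs V ^ 2 - 1) * Real.sqrt (beta1 cd cs V)) : ℝ)))) := by
  have h₁ : 0 < beta1 cd cs V := div_pos (one_pos.trans hs) (sub_pos.mpr hd)
  have h₂ : 0 < beta2 cd cs V := div_pos (one_pos.trans hd) (sub_pos.mpr hs)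
  have hT : comap im atTop ≤ comap im (cobounded ℝ) :=
    comap_mono IsOrderBornology.atTop_le_cobounded
  have hB : comap im atBot ≤ comap im (cobounded ℝ) :=
    comap_mono IsOrderBornology.atBot_le_cobounded
  have cotT := tendsto_cot_comap_im_atTop.comp
    (tendsto_ofReal_mul_comap_im (tendsto_id.const_mul_atTop Real.pi_div_two_pos))
  have cotB := tendsto_cot_comap_im_atBot.comp
    (tendsto_ofReal_mul_comap_im (tendsto_id.const_mul_atBot Real.pi_div_two_pos))
  simp only [← neg_mul]
  exact ⟨neg_neg I ▸ tendsto_GG1_mul_cpow hT cotT nu h₁ h₂, tendsto_GG1_mul_cpow hB cotB nu h₁ h₂,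
    neg_neg I ▸ tendsto_GG2_mul_cpow hT cotT nu h₁ h₂, tendsto_GG2_mul_cpow hB cotB nu h₁ h₂⟩

lemma tendsto_vertical_line_comap_im (σ : ℝ) (l : Filter ℝ) :
    Tendsto (fun τ : ℝ => (σ + τ * I : ℂ)) l (comap im l) :=
  tendsto_comap_iff.mpr (tendsto_id.congr fun τ => by simp)

theorem G_oscillation_asymptotics
    (nu cd cs V : ℝ) (hnu0 : 0 < nu) (hnu1 : nu < 1)
    (hV : 0 < V) (hVs : V < cs) (hsd : cs < cd) (σ : ℝ) :
    Tendsto (fun τ : ℝ => GG1 nu cd cs V ((σ : ℂ) + (τ : ℂ) * Complex.I)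
        * ((beta2 cd cs V / beta1 cd cs V : ℝ) : ℂ)
          ^ (-(((σ : ℂ) + (τ : ℂ) * Complex.I) / 2))) atTop
      (nhds (Complex.I * (((aD cd V) ^ 2 - (aS cs V) ^ 2)
        / (((aD cd V) ^ 2 - 1) * Real.sqrt (beta2 cd cs V)) : ℝ))) ∧
    Tendsto (fun τ : ℝ => GG1 nu cd cs V ((σ : ℂ) + (τ : ℂ) * Complex.I)
        * ((beta2 cd cs V / beta1 cd cs V : ℝ) : ℂ)
          ^ (-(((σ : ℂ) + (τ : ℂ) * Complex.I) / 2))) atBot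
      (nhds (-(Complex.I * (((aD cd V) ^ 2 - (aS cs V) ^ 2)
        / (((aD cd V) ^ 2 - 1) * Real.sqrt (beta2 cd cs V)) : ℝ)))) ∧
    Tendsto (fun τ : ℝ => GG2 nu cd cs V ((σ : ℂ) + (τ : ℂ) * Complex.I)
        * ((beta2 cd cs V / beta1 cd cs V : ℝ) : ℂ)
          ^ (((σ : ℂ) + (τ : ℂ) * Complex.I) / 2)) atTop
      (nhds (Complex.I * (((aD cd V) ^ 2 - (aS cs V) ^ 2)
        / (((aS cs V) ^ 2 - 1) * Real.sqrt (beta1 cd cs V)) : ℝ))) ∧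
    Tendsto (fun τ : ℝ => GG2 nu cd cs V ((σ : ℂ) + (τ : ℂ) * Complex.I)
        * ((beta2 cd cs V / beta1 cd cs V : ℝ) : ℂ)
          ^ (((σ : ℂ) + (τ : ℂ) * Complex.I) / 2)) atBot
      (nhds (-(Complex.I * (((aD cd V) ^ 2 - (aS cs V) ^ 2)
        / (((aS cs V) ^ 2 - 1) * Real.sqrt (beta1 cd cs V)) : ℝ)))) := by
  obtain ⟨h₁T, h₁B, h₂T, h₂B⟩ := G_oscillation_asymptotics_general nu
    (one_lt_pow₀ ((one_lt_div hV).mpr (hVs.trans hsd)) two_ne_zero : 1 < aD cd V ^ 2)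
    (one_lt_pow₀ ((one_lt_div hV).mpr hVs) two_ne_zero : 1 < aS cs V ^ 2)
  have hline := tendsto_vertical_line_comap_im σ
  exact ⟨h₁T.comp (hline _), h₁B.comp (hline _), h₂T.comp (hline _), h₂B.comp (hline _)⟩

end
end

section
/- Let 0 < ν < 1, let s ∈ ℂ with 0 < Re s < ν, and let ξ ∈ ℝ with ξ ≠ 0. Then the improper integral lim_{R→∞} ∫_{−R}^{R} e^{iαξ} |α|^{ν−s−1} dα exists and equals 2·Γ(ν−s)·cos(π(ν−s)/2)·|ξ|^{s−ν}. -/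
open MeasureTheory Filter Complex

/-!
For `Re z > 0` the integral `∫₀^∞ t ^ (a - 1) * exp (-z t) dt = Γ(a) z ^ (-a)` is the Mellin
transform of `exp (-z t)`; the theorem needs it for `z = ±iξ`, where it converges only
conditionally. Writing `s = a - 1`, so that `-1 < Re s < 0`, integration by parts with the primitive
`1 - exp (-z t)` gives
`z ∫₀^R t ^ s exp (-z t) dt = R ^ s (1 - exp (-z R)) - s ∫₀^R t ^ (s - 1) (1 - exp (-z t)) dt`.
The last integral (Cauchy–Saalschütz) converges absolutely for all `Re z ≥ 0` and is continuous
there, so its value `-Γ(s) z ^ (-s)`, known for `Re z > 0`, persists on the imaginary axis. Adding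
the contributions of `iξ` and `-iξ` produces `i ^ (-a) + (-i) ^ (-a) = 2 cos (π a / 2)`.
-/

open Set (Ioi)
open scoped Topology

lemma norm_exp_sub_exp_le {z w : ℂ} (hz : z.re ≤ 0) (hw : w.re ≤ 0) :
    ‖exp z - exp w‖ ≤ ‖z - w‖ := by
  have h := (convex_halfSpace_re_le 0).norm_image_sub_le_of_norm_hasDerivWithin_le (C := 1)
    (fun x _ => (hasDerivAt_exp x).hasDerivWithinAt)
    (fun x hx => by rw [norm_exp]; exact Real.exp_le_one_iff.2 hx) hw hz
  rwa [one_mul] at h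

lemma norm_one_sub_exp_neg_mul_le {z : ℂ} (hz : 0 ≤ z.re) {t : ℝ} (ht : 0 ≤ t) :
    ‖1 - exp (-(z * t))‖ ≤ max 2 ‖z‖ * min 1 t := by
  have hre : (-(z * t)).re ≤ 0 := by
    rw [neg_re, re_mul_ofReal]
    exact neg_nonpos.2 (mul_nonneg hz ht)
  rcases le_total t 1 with h | h
  · calc ‖1 - exp (-(z * t))‖ = ‖exp 0 - exp (-(z * t))‖ := by rw [exp_zero]
      _ ≤ ‖0 - -(z * t)‖ := norm_exp_sub_exp_le le_rfl hre
      _ = ‖z‖ * t := by simp [abs_of_nonneg ht]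
      _ ≤ max 2 ‖z‖ * min 1 t := by
        rw [min_eq_right h]
        gcongr
        exact le_max_right _ _
  · calc ‖1 - exp (-(z * t))‖ ≤ ‖(1 : ℂ)‖ + ‖exp (-(z * t))‖ := norm_sub_le _ _
      _ ≤ 1 + 1 := by
        rw [norm_one, norm_exp]
        gcongr
        exact Real.exp_le_one_iff.2 hre
      _ ≤ max 2 ‖z‖ * min 1 t := by
        rw [min_eq_left h, mul_one, one_add_one_eq_two]
        exact le_max_left _ _

lemma norm_cpow_mul_one_sub_exp_neg_mul_le (c : ℂ) {z : ℂ} (hz : 0 ≤ z.re) {t : ℝ} (ht : 0 < t) :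
    ‖(t : ℂ) ^ c * (1 - exp (-(z * t)))‖ ≤ max 2 ‖z‖ * (t ^ c.re * min 1 t) := by
  rw [norm_mul, norm_cpow_eq_rpow_re_of_pos ht, mul_left_comm]
  gcongr
  exact norm_one_sub_exp_neg_mul_le hz ht.le

lemma norm_cpow_mul_exp_neg_mul (c z : ℂ) {t : ℝ} (ht : 0 < t) :
    ‖(t : ℂ) ^ c * exp (-(z * t))‖ = t ^ c.re * Real.exp (-(z.re * t)) := by
  rw [norm_mul, norm_cpow_eq_rpow_re_of_pos ht, norm_exp, neg_re, re_mul_ofReal]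

lemma aestronglyMeasurable_cpow_mul (c : ℂ) {f : ℝ → ℂ} (hf : Continuous f) :
    AEStronglyMeasurable (fun t : ℝ => (t : ℂ) ^ c * f t) (volume.restrict (Ioi 0)) := by
  refine ContinuousOn.aestronglyMeasurable (fun t ht => ?_) measurableSet_Ioi
  exact ((continuousAt_ofReal_cpow_const t c (Or.inr (ne_of_gt ht))).mul
    hf.continuousAt).continuousWithinAt

lemma integrableOn_Ioi_rpow_mul_min_one {σ : ℝ} (h₁ : -1 < σ) (h₀ : σ < 0) :
    IntegrableOn (fun t : ℝ => t ^ (σ - 1) * min 1 t) (Ioi 0) := by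
  refine mellin_convergent_of_isBigO_scalar (f := fun t : ℝ => min 1 t) (a := 0) (b := -1)
    ((continuous_const.min continuous_id).locallyIntegrable.locallyIntegrableOn _) ?_ h₀ ?_ h₁
  · refine (Asymptotics.isBigO_refl _ _).congr' ?_ .rfl
    filter_upwards [eventually_ge_atTop 1] with t ht
    simp [ht]
  · refine (Asymptotics.isBigO_refl _ _).congr' ?_ .rfl
    filter_upwards [Ioo_mem_nhdsGT one_pos] with t ht
    simp [ht.2.le]

lemma integrableOn_Ioi_rpow_mul_exp_neg_mul {σ b : ℝ} (hσ : 0 < σ) (hb : 0 < b) :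
    IntegrableOn (fun t : ℝ => t ^ (σ - 1) * Real.exp (-(b * t))) (Ioi 0) := by
  simpa using integrableOn_rpow_mul_exp_neg_mul_rpow (p := 1) (by linarith) one_pos hb

lemma mellinConvergent_exp_neg_mul {a z : ℂ} (ha : 0 < a.re) (hz : 0 < z.re) :
    MellinConvergent (fun t : ℝ => exp (-(z * t))) a := by
  refine (integrableOn_Ioi_rpow_mul_exp_neg_mul ha hz).mono'
    (aestronglyMeasurable_cpow_mul _ (by fun_prop)) ?_
  filter_upwards [ae_restrict_mem measurableSet_Ioi] with t ht
  simpa using (norm_cpow_mul_exp_neg_mul (a - 1) z ht).le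

lemma hasDerivAt_mellin_exp_neg_mul {a z : ℂ} (ha : 0 < a.re) (hz : 0 < z.re) :
    HasDerivAt (fun w : ℂ => mellin (fun t : ℝ => exp (-(w * t))) a)
      (-mellin (fun t : ℝ => exp (-(z * t))) (a + 1)) z := by
  have hU : {w : ℂ | z.re / 2 < w.re} ∈ 𝓝 z :=
    (isOpen_lt continuous_const continuous_re).mem_nhds (half_lt_self hz)
  rw [mellin, ← integral_neg]
  refine (hasDerivAt_integral_of_dominated_loc_of_deriv_le
    (F := fun (w : ℂ) (t : ℝ) => (t : ℂ) ^ (a - 1) • exp (-(w * t)))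
    (F' := fun (w : ℂ) (t : ℝ) => -((t : ℂ) ^ (a + 1 - 1) • exp (-(w * t)))) hU
    (.of_forall fun w => aestronglyMeasurable_cpow_mul _ (by fun_prop))
    (mellinConvergent_exp_neg_mul ha hz)
    (aestronglyMeasurable_cpow_mul _ (by fun_prop)).neg ?_
    (integrableOn_Ioi_rpow_mul_exp_neg_mul (σ := a.re + 1) (by linarith) (half_pos hz)) ?_).2
  · filter_upwards [ae_restrict_mem measurableSet_Ioi] with t (ht : 0 < t) w (hw : z.re / 2 < w.re)
    rw [norm_neg, smul_eq_mul, norm_cpow_mul_exp_neg_mul _ _ ht]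
    simp only [sub_re, add_re, one_re]
    gcongr
  · filter_upwards [ae_restrict_mem measurableSet_Ioi] with t (ht : 0 < t) w _
    have hexp : HasDerivAt (fun w : ℂ => exp (-(w * t))) (exp (-(w * t)) * -t) w := by
      simpa using ((hasDerivAt_id w).mul_const (t : ℂ)).neg.cexp
    refine (hexp.const_mul ((t : ℂ) ^ (a - 1))).congr_deriv ?_
    have hpow : (t : ℂ) ^ (a + 1 - 1) = (t : ℂ) ^ (a - 1) * t := by
      rw [add_sub_right_comm, cpow_add _ _ (ofReal_ne_zero.2 ht.ne'), cpow_one]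
    rw [smul_eq_mul, hpow]
    ring

lemma mellin_exp_neg_mul_ofReal {a : ℂ} (ha : 0 < a.re) {r : ℝ} (hr : 0 < r) :
    mellin (fun t : ℝ => exp (-(r * t))) a = Gamma a * (r : ℂ) ^ (-a) := by
  simp only [mellin, smul_eq_mul]
  rw [integral_cpow_mul_exp_neg_mul_Ioi ha hr, mul_comm, one_div, cpow_neg, inv_cpow]
  rw [arg_ofReal_of_nonneg hr.le]
  exact Real.pi_pos.ne

lemma mellin_exp_neg_mul {a z : ℂ} (ha : 0 < a.re) (hz : 0 < z.re) :
    mellin (fun t : ℝ => exp (-(z * t))) a = Gamma a * z ^ (-a) := by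
  have hopen : IsOpen {w : ℂ | 0 < w.re} := isOpen_lt continuous_const continuous_re
  have hmellin : DifferentiableOn ℂ (fun w : ℂ => mellin (fun t : ℝ => exp (-(w * t))) a)
      {w : ℂ | 0 < w.re} := fun w hw =>
    (hasDerivAt_mellin_exp_neg_mul ha hw).differentiableAt.differentiableWithinAt
  have hpow : DifferentiableOn ℂ (fun w : ℂ => Gamma a * w ^ (-a)) {w : ℂ | 0 < w.re} :=
    fun w hw => ((differentiableAt_id.cpow_const (Or.inl hw)).const_mul _).differentiableWithinAt
  have hreal : ∃ᶠ w in 𝓝[≠] (1 : ℂ),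
      mellin (fun t : ℝ => exp (-(w * t))) a = Gamma a * w ^ (-a) := by
    have htendsto : Tendsto ((↑) : ℝ → ℂ) (𝓝[≠] 1) (𝓝[≠] 1) :=
      tendsto_nhdsWithin_of_tendsto_nhds_of_eventually_within _
        ((continuous_ofReal.tendsto 1).mono_left nhdsWithin_le_nhds)
        (by filter_upwards [self_mem_nhdsWithin] with r hr using by simpa using hr)
    refine htendsto.frequently (Eventually.frequently ?_)
    filter_upwards [nhdsWithin_le_nhds (lt_mem_nhds one_pos)] with r hr
    exact mellin_exp_neg_mul_ofReal ha hr
  exact (hmellin.analyticOnNhd hopen).eqOn_of_preconnected_of_frequently_eq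
    (hpow.analyticOnNhd hopen) (convex_halfSpace_re_gt 0).isPreconnected (by simp) hreal hz

lemma intervalIntegrable_cpow_mul_exp_neg_mul {c : ℂ} (hc : -1 < c.re) (z : ℂ) (x y : ℝ) :
    IntervalIntegrable (fun t : ℝ => (t : ℂ) ^ c * exp (-(z * t))) volume x y :=
  (intervalIntegral.intervalIntegrable_cpow' hc).mul_continuousOn (by fun_prop)

section Saalschutz

variable {s : ℂ}

lemma mellinConvergent_one_sub_exp_neg_mul (h₁ : -1 < s.re) (h₀ : s.re < 0) {z : ℂ}
    (hz : 0 ≤ z.re) : MellinConvergent (fun t : ℝ => 1 - exp (-(z * t))) s := by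
  refine ((integrableOn_Ioi_rpow_mul_min_one h₁ h₀).const_mul (max 2 ‖z‖)).mono'
    (aestronglyMeasurable_cpow_mul _ (by fun_prop)) ?_
  filter_upwards [ae_restrict_mem measurableSet_Ioi] with t ht
  simpa using norm_cpow_mul_one_sub_exp_neg_mul_le (s - 1) hz ht

lemma continuousOn_mellin_one_sub_exp_neg_mul (h₁ : -1 < s.re) (h₀ : s.re < 0) :
    ContinuousOn (fun z : ℂ => mellin (fun t : ℝ => 1 - exp (-(z * t))) s) {z | 0 ≤ z.re} := by
  intro z _
  refine continuousWithinAt_of_dominated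
    (.of_forall fun w => aestronglyMeasurable_cpow_mul _ (by fun_prop)) ?_
    ((integrableOn_Ioi_rpow_mul_min_one h₁ h₀).const_mul (max 2 (‖z‖ + 1)))
    (.of_forall fun t => by fun_prop)
  filter_upwards [self_mem_nhdsWithin,
    nhdsWithin_le_nhds (continuous_norm.continuousAt.eventually_le_const (lt_add_one ‖z‖))]
    with w (hw : 0 ≤ w.re) hwz
  filter_upwards [ae_restrict_mem measurableSet_Ioi] with t (ht : 0 < t)
  calc ‖(t : ℂ) ^ (s - 1) * (1 - exp (-(w * t)))‖
      ≤ max 2 ‖w‖ * (t ^ (s - 1).re * min 1 t) := norm_cpow_mul_one_sub_exp_neg_mul_le _ hw ht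
    _ ≤ max 2 (‖z‖ + 1) * (t ^ (s.re - 1) * min 1 t) := by
      rw [sub_re, one_re]
      gcongr

lemma tendsto_cpow_mul_one_sub_exp_neg_mul_nhdsGT_zero (h₁ : -1 < s.re) {z : ℂ}
    (hz : 0 ≤ z.re) :
    Tendsto (fun t : ℝ => (t : ℂ) ^ s * (1 - exp (-(z * t)))) (𝓝[>] 0) (𝓝 0) := by
  have hlim : Tendsto (fun t : ℝ => max 2 ‖z‖ * t ^ (s.re + 1)) (𝓝[>] 0) (𝓝 0) := by
    have h := (Real.continuousAt_rpow_const 0 (s.re + 1) (Or.inr (by linarith))).tendsto.const_mul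
      (max 2 ‖z‖)
    rw [Real.zero_rpow (by linarith), mul_zero] at h
    exact h.mono_left nhdsWithin_le_nhds
  refine squeeze_zero_norm' ?_ hlim
  filter_upwards [self_mem_nhdsWithin] with t (ht : 0 < t)
  refine (norm_cpow_mul_one_sub_exp_neg_mul_le s hz ht).trans ?_
  rw [Real.rpow_add_one ht.ne']
  gcongr
  exact min_le_right _ _

lemma tendsto_cpow_mul_one_sub_exp_neg_mul_atTop (h₀ : s.re < 0) {z : ℂ} (hz : 0 ≤ z.re) :
    Tendsto (fun t : ℝ => (t : ℂ) ^ s * (1 - exp (-(z * t)))) atTop (𝓝 0) := by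
  have hlim : Tendsto (fun t : ℝ => max 2 ‖z‖ * t ^ s.re) atTop (𝓝 0) := by
    simpa using (tendsto_rpow_neg_atTop (neg_pos.2 h₀)).const_mul (max 2 ‖z‖)
  refine squeeze_zero_norm' ?_ hlim
  filter_upwards [eventually_gt_atTop 0] with t ht
  refine (norm_cpow_mul_one_sub_exp_neg_mul_le s hz ht).trans ?_
  gcongr
  exact mul_le_of_le_one_right (by positivity) (min_le_left _ _)

lemma mul_integral_cpow_mul_exp_neg_mul (h₁ : -1 < s.re) (h₀ : s.re < 0) {z : ℂ}
    (hz : 0 ≤ z.re) {R : ℝ} (hR : 0 < R) :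
    z * ∫ t in (0 : ℝ)..R, (t : ℂ) ^ s * exp (-(z * t)) =
      (R : ℂ) ^ s * (1 - exp (-(z * R))) -
        s * ∫ t in (0 : ℝ)..R, (t : ℂ) ^ (s - 1) * (1 - exp (-(z * t))) := by
  have hs : s ≠ 0 := by
    rintro rfl
    simp at h₀
  have hderiv : ∀ t : ℝ, 0 < t → HasDerivAt (fun t : ℝ => (t : ℂ) ^ s * (1 - exp (-(z * t))))
      (s * ((t : ℂ) ^ (s - 1) * (1 - exp (-(z * t)))) + z * ((t : ℂ) ^ s * exp (-(z * t)))) t := by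
    intro t ht
    have hexp : HasDerivAt (fun t : ℝ => 1 - exp (-(z * t))) (z * exp (-(z * t))) t := by
      simpa [mul_comm] using ((ofRealCLM.hasDerivAt (x := t)).const_mul z).neg.cexp.const_sub 1
    exact ((hasDerivAt_ofReal_cpow_const ht.ne' hs).mul hexp).congr_deriv (by ring)
  have hi_sub : IntervalIntegrable (fun t : ℝ => (t : ℂ) ^ (s - 1) * (1 - exp (-(z * t))))
      volume 0 R :=
    (intervalIntegrable_iff_integrableOn_Ioc_of_le hR.le).2
      ((mellinConvergent_one_sub_exp_neg_mul h₁ h₀ hz).mono_set Set.Ioc_subset_Ioi_self)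
  have hi_exp := intervalIntegrable_cpow_mul_exp_neg_mul h₁ z 0 R
  have hFTC := intervalIntegral.integral_eq_sub_of_hasDerivAt_of_tendsto hR
    (fun t ht => hderiv t ht.1) ((hi_sub.const_mul s).add (hi_exp.const_mul z))
    (tendsto_cpow_mul_one_sub_exp_neg_mul_nhdsGT_zero h₁ hz)
    ((hderiv R hR).continuousAt.tendsto.mono_left nhdsWithin_le_nhds)
  rw [intervalIntegral.integral_add (hi_sub.const_mul s) (hi_exp.const_mul z),
    intervalIntegral.integral_const_mul, intervalIntegral.integral_const_mul] at hFTC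
  linear_combination hFTC

lemma tendsto_mul_integral_cpow_mul_exp_neg_mul (h₁ : -1 < s.re) (h₀ : s.re < 0) {z : ℂ}
    (hz : 0 ≤ z.re) :
    Tendsto (fun R : ℝ => z * ∫ t in (0 : ℝ)..R, (t : ℂ) ^ s * exp (-(z * t))) atTop
      (𝓝 (-(s * mellin (fun t : ℝ => 1 - exp (-(z * t))) s))) := by
  have hmellin := (intervalIntegral_tendsto_integral_Ioi 0
    (mellinConvergent_one_sub_exp_neg_mul h₁ h₀ hz) tendsto_id).const_mul s
  have hlim := (tendsto_cpow_mul_one_sub_exp_neg_mul_atTop h₀ hz).sub hmellin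
  rw [zero_sub] at hlim
  refine hlim.congr' ?_
  filter_upwards [eventually_gt_atTop 0] with R hR
  exact (mul_integral_cpow_mul_exp_neg_mul h₁ h₀ hz hR).symm

lemma mellin_one_sub_exp_neg_mul_of_re_pos (h₁ : -1 < s.re) (h₀ : s.re < 0) {z : ℂ}
    (hz : 0 < z.re) : mellin (fun t : ℝ => 1 - exp (-(z * t))) s = -(Gamma s * z ^ (-s)) := by
  have hs : s ≠ 0 := by
    rintro rfl
    simp at h₀
  have hz0 : z ≠ 0 := by
    rintro rfl
    simp at hz
  have ha : 0 < (s + 1).re := by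
    rw [add_re, one_re]
    linarith
  have hmellin := (intervalIntegral_tendsto_integral_Ioi 0
    (mellinConvergent_exp_neg_mul ha hz) tendsto_id).const_mul z
  simp only [id, smul_eq_mul, add_sub_cancel_right] at hmellin
  have h := tendsto_nhds_unique (tendsto_mul_integral_cpow_mul_exp_neg_mul h₁ h₀ hz.le) hmellin
  have hG := mellin_exp_neg_mul ha hz
  simp only [mellin, smul_eq_mul, add_sub_cancel_right] at hG
  rw [hG, Gamma_add_one s hs, neg_add, ← sub_eq_add_neg, cpow_sub _ _ hz0, cpow_one] at h
  field_simp at h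
  linear_combination -h

theorem hasMellin_one_sub_exp_neg_mul (h₁ : -1 < s.re) (h₀ : s.re < 0) {z : ℂ} (hz : 0 ≤ z.re) :
    HasMellin (fun t : ℝ => 1 - exp (-(z * t))) s (-(Gamma s * z ^ (-s))) := by
  refine ⟨mellinConvergent_one_sub_exp_neg_mul h₁ h₀ hz, ?_⟩
  have hpow : ContinuousOn (fun w : ℂ => -(Gamma s * w ^ (-s))) {w | 0 ≤ w.re} := fun w hw =>
    ((continuousAt_cpow_const_of_re_pos (Or.inl hw)
      (by simpa using h₀)).const_mul _).neg.continuousWithinAt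
  have heq : Set.EqOn (fun w : ℂ => mellin (fun t : ℝ => 1 - exp (-(w * t))) s)
      (fun w => -(Gamma s * w ^ (-s))) {w | 0 < w.re} :=
    fun w hw => mellin_one_sub_exp_neg_mul_of_re_pos h₁ h₀ hw
  exact heq.of_subset_closure (continuousOn_mellin_one_sub_exp_neg_mul h₁ h₀) hpow
    (fun w (hw : 0 < w.re) => hw.le) (closure_setOfPred_lt_re 0).ge hz

end Saalschutz

theorem tendsto_integral_cpow_mul_exp_neg_mul {a z : ℂ} (ha₀ : 0 < a.re) (ha₁ : a.re < 1)
    (hz : 0 ≤ z.re) (hz0 : z ≠ 0) :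
    Tendsto (fun R : ℝ => ∫ t in (0 : ℝ)..R, (t : ℂ) ^ (a - 1) * exp (-(z * t))) atTop
      (𝓝 (Gamma a * z ^ (-a))) := by
  have h₁ : -1 < (a - 1).re := by simpa using ha₀
  have h₀ : (a - 1).re < 0 := by simpa using ha₁
  have ha : a - 1 ≠ 0 := by
    intro h
    simp [h] at h₀
  have h := (tendsto_mul_integral_cpow_mul_exp_neg_mul h₁ h₀ hz).const_mul z⁻¹
  simp only [inv_mul_cancel_left₀ hz0] at h
  have hGamma : Gamma a = (a - 1) * Gamma (a - 1) := by
    simpa using Gamma_add_one (a - 1) ha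
  have hpow : z ^ (-(a - 1)) = z * z ^ (-a) := by
    rw [neg_sub, sub_eq_add_neg, cpow_add _ _ hz0, cpow_one]
  rw [(hasMellin_one_sub_exp_neg_mul h₁ h₀ hz).2, hpow] at h
  convert h using 2
  rw [hGamma]
  field_simp

lemma ofReal_mul_cpow {r : ℝ} (hr : 0 < r) {w : ℂ} (hw : w ≠ 0) (c : ℂ) :
    (r * w) ^ c = (r : ℂ) ^ c * w ^ c := by
  have hr0 : (r : ℂ) ≠ 0 := ofReal_ne_zero.2 hr.ne'
  rw [cpow_def_of_ne_zero (mul_ne_zero hr0 hw), cpow_def_of_ne_zero hr0, cpow_def_of_ne_zero hw,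
    log_ofReal_mul hr hw, ofReal_log hr.le, add_mul, exp_add]

lemma I_cpow_add_neg_I_cpow (c : ℂ) : I ^ c + (-I) ^ c = 2 * cos (Real.pi * c / 2) := by
  rw [two_cos, cpow_def_of_ne_zero I_ne_zero, cpow_def_of_ne_zero (neg_ne_zero.2 I_ne_zero),
    log_I, log_neg_I]
  ring_nf

lemma mul_I_cpow_add_neg_mul_I_cpow {x : ℝ} (hx : x ≠ 0) (c : ℂ) :
    (x * I) ^ c + (-(x * I)) ^ c = 2 * cos (Real.pi * c / 2) * ((|x| : ℝ) : ℂ) ^ c := by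
  wlog hpos : 0 < x generalizing x
  · have h := this (neg_ne_zero.2 hx) (neg_pos.2 (hx.lt_of_le (not_lt.1 hpos)))
    rwa [abs_neg, ofReal_neg, neg_mul, neg_neg, add_comm] at h
  rw [abs_of_pos hpos, ← mul_neg, ofReal_mul_cpow hpos I_ne_zero,
    ofReal_mul_cpow hpos (neg_ne_zero.2 I_ne_zero), ← mul_add, I_cpow_add_neg_I_cpow, mul_comm]

lemma intervalIntegrable_abs_cpow {c : ℂ} (hc : -1 < c.re) (x y : ℝ) :
    IntervalIntegrable (fun t : ℝ => ((|t| : ℝ) : ℂ) ^ c) volume x y := by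
  refine intervalIntegrable_of_even (by simp) fun R hR => ?_
  refine (intervalIntegral.intervalIntegrable_cpow' hc).congr fun t ht => ?_
  rw [Set.uIoc_of_le hR.le] at ht
  simp only [abs_of_pos ht.1]

lemma integral_neg_self_eq_add {E : Type*} [NormedAddCommGroup E] [NormedSpace ℝ E] {f : ℝ → E}
    {R : ℝ} (hf : IntervalIntegrable f volume (-R) R) :
    ∫ t in (-R)..R, f t = (∫ t in (0 : ℝ)..R, f (-t)) + ∫ t in (0 : ℝ)..R, f t := by
  have h0 : (0 : ℝ) ∈ Set.uIcc (-R) R := by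
    rcases le_total 0 R with hR | hR
    · exact Set.mem_uIcc_of_le (neg_nonpos.2 hR) hR
    · exact Set.mem_uIcc_of_ge hR (neg_nonneg.2 hR)
  rw [intervalIntegral.integral_comp_neg, neg_zero,
    intervalIntegral.integral_add_adjacent_intervals
      (hf.mono_set (Set.uIcc_subset_uIcc_left h0)) (hf.mono_set (Set.uIcc_subset_uIcc_right h0))]

lemma integral_neg_self_exp_mul_abs_cpow {c : ℂ} (hc : -1 < c.re) (ξ : ℝ) {R : ℝ} (hR : 0 ≤ R) :
    ∫ t in (-R)..R, exp (I * t * ξ) * ((|t| : ℝ) : ℂ) ^ c =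
      (∫ t in (0 : ℝ)..R, (t : ℂ) ^ c * exp (-(ξ * I * t))) +
        ∫ t in (0 : ℝ)..R, (t : ℂ) ^ c * exp (-(-(ξ * I) * t)) := by
  rw [integral_neg_self_eq_add
    ((intervalIntegrable_abs_cpow hc _ _).continuousOn_mul (by fun_prop))]
  congr 1 <;>
  · refine intervalIntegral.integral_congr fun t ht => ?_
    rw [Set.uIcc_of_le hR] at ht
    simp only [abs_neg, abs_of_nonneg ht.1, ofReal_neg]
    ring_nf

theorem fourier_cos_power_integral_general {a : ℂ} (ha₀ : 0 < a.re) (ha₁ : a.re < 1)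
    {ξ : ℝ} (hξ : ξ ≠ 0) :
    Tendsto (fun R : ℝ => ∫ α in (-R)..R, exp (I * α * ξ) * ((|α| : ℝ) : ℂ) ^ (a - 1)) atTop
      (𝓝 (2 * Gamma a * cos (Real.pi * a / 2) * ((|ξ| : ℝ) : ℂ) ^ (-a))) := by
  have hz0 : (ξ * I : ℂ) ≠ 0 := mul_ne_zero (ofReal_ne_zero.2 hξ) I_ne_zero
  have hneg := tendsto_integral_cpow_mul_exp_neg_mul ha₀ ha₁ (z := ξ * I) (by simp) hz0
  have hpos := tendsto_integral_cpow_mul_exp_neg_mul ha₀ ha₁ (z := -(ξ * I)) (by simp)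
    (neg_ne_zero.2 hz0)
  have hcos : cos (Real.pi * -a / 2) = cos (Real.pi * a / 2) := by
    rw [mul_neg, neg_div, cos_neg]
  have hlim : Gamma a * (ξ * I) ^ (-a) + Gamma a * (-(ξ * I)) ^ (-a) =
      2 * Gamma a * cos (Real.pi * a / 2) * ((|ξ| : ℝ) : ℂ) ^ (-a) := by
    rw [← mul_add, mul_I_cpow_add_neg_mul_I_cpow hξ, hcos]
    ring
  rw [← hlim]
  refine (hneg.add hpos).congr' ?_
  filter_upwards [eventually_ge_atTop 0] with R hR
  exact (integral_neg_self_exp_mul_abs_cpow (by simpa using ha₀) ξ hR).symm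

theorem fourier_cos_power_integral (nu : ℝ) (hnu0 : 0 < nu) (hnu1 : nu < 1)
    (s : ℂ) (hs0 : 0 < s.re) (hs1 : s.re < nu) (ξ : ℝ) (hξ : ξ ≠ 0) :
    Tendsto (fun R : ℝ => ∫ α in (-R)..R,
        Complex.exp (Complex.I * (α : ℂ) * (ξ : ℂ)) * ((|α| : ℝ) : ℂ) ^ ((nu : ℂ) - s - 1))
      atTop
      (nhds (2 * Complex.Gamma ((nu : ℂ) - s)
        * Complex.cos (↑Real.pi * ((nu : ℂ) - s) / 2) * ((|ξ| : ℝ) : ℂ) ^ (s - (nu : ℂ)))) := by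
  rw [← neg_sub (nu : ℂ) s]
  exact fourier_cos_power_integral_general (by simpa using hs1)
    ((sub_le_self nu hs0.le).trans_lt hnu1) hξ
end

section
/- Let x ∈ ℝ with 0 < x < 1 and let δ ∈ ℝ with δ ≠ 0. Then the series Σ_{j=0}^{∞} (−1)^j x^j/(iδ − j) converges absolutely and ∫₀¹ y^{iδ}/(y + x) dy = πi·x^{iδ}/sinh(πδ) + Σ_{j=0}^{∞} (−1)^j x^j/(iδ − j). -/
open MeasureTheory Filter Complex

/-! The reflection formula evaluates `∫₀^∞ y ^ s / (y + x) ^ 2 dy` as a Beta integral, and on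
`(1, ∞)`, where `x / y < 1`, the integrand can be expanded in powers of `x / y` and integrated term
by term. The difference of the two is the integral over `(0, 1)`, and integration by parts turns it
into `∫₀¹ y ^ s / (y + x) dy`. The exponent is `2` because for `s = iδ` the integral of
`y ^ s / (y + x)` itself diverges at infinity. -/

section BetaIntegral

variable {x : ℝ}

lemma image_div_add_Ioi (hx : 0 < x) :
    (fun y : ℝ => y / (y + x)) '' Set.Ioi 0 = Set.Ioo 0 1 := by
  ext t
  simp only [Set.mem_image, Set.mem_Ioi, Set.mem_Ioo]
  constructor
  · rintro ⟨y, hy, rfl⟩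
    exact ⟨by positivity, by rw [div_lt_one (by positivity)]; linarith⟩
  · rintro ⟨ht0, ht1⟩
    have ht : 0 < 1 - t := by linarith
    refine ⟨x * t / (1 - t), div_pos (mul_pos hx ht0) ht, ?_⟩
    field_simp
    ring

lemma injOn_div_add_Ioi (hx : 0 < x) :
    Set.InjOn (fun y : ℝ => y / (y + x)) (Set.Ioi 0) := by
  intro a ha b hb hab
  rw [Set.mem_Ioi] at ha hb
  rw [div_eq_div_iff (by positivity) (by positivity)] at hab
  exact mul_right_cancel₀ hx.ne' (by linarith)

lemma hasDerivAt_div_add {y : ℝ} (hy : y + x ≠ 0) :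
    HasDerivAt (fun y : ℝ => y / (y + x)) (x / (y + x) ^ 2) y := by
  convert! (hasDerivAt_id y).div ((hasDerivAt_id y).add_const x) hy using 1
  simp

lemma abs_deriv_smul_betaIntegrand_div_add (hx : 0 < x) (u v : ℂ) {y : ℝ} (hy : 0 < y) :
    |x / (y + x) ^ 2| • (((y / (y + x) : ℝ) : ℂ) ^ (u - 1) *
        (1 - ((y / (y + x) : ℝ) : ℂ)) ^ (v - 1)) =
      (x : ℂ) ^ v * ((y : ℂ) ^ (u - 1) / ((y : ℂ) + x) ^ (u + v)) := by
  have hyx : 0 < y + x := by positivity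
  have hxc : (x : ℂ) ≠ 0 := ofReal_ne_zero.2 hx.ne'
  have hyxc : ((y + x : ℝ) : ℂ) ≠ 0 := ofReal_ne_zero.2 hyx.ne'
  have hsub : (1 : ℂ) - ((y / (y + x) : ℝ) : ℂ) = (x : ℂ) / ((y + x : ℝ) : ℂ) := by
    push_cast at hyxc ⊢
    field_simp
    ring
  have hpow : ((y + x : ℝ) : ℂ) ^ (u + v) =
      ((y + x : ℝ) : ℂ) ^ (u - 1) * ((y + x : ℝ) : ℂ) ^ (v - 1) * ((y + x : ℝ) : ℂ) ^ 2 := by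
    rw [← cpow_add _ _ hyxc, ← cpow_ofNat, ← cpow_add _ _ hyxc]
    ring_nf
  rw [hsub, abs_of_pos (by positivity), ofReal_div y, div_cpow_ofReal_nonneg hy.le hyx.le,
    div_cpow_ofReal_nonneg hx.le hyx.le, real_smul, ← ofReal_add, hpow, cpow_sub _ _ hxc, cpow_one]
  push_cast
  field_simp

lemma integral_Ioi_cpow_div_add_cpow (hx : 0 < x) (u v : ℂ) :
    ∫ y in Set.Ioi (0 : ℝ), (y : ℂ) ^ (u - 1) / ((y : ℂ) + x) ^ (u + v) =
      (x : ℂ) ^ (-v) * betaIntegral u v := by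
  have hxv : (x : ℂ) ^ v ≠ 0 := by simp [cpow_eq_zero_iff, hx.ne']
  rw [betaIntegral, intervalIntegral.integral_of_le zero_le_one, integral_Ioc_eq_integral_Ioo,
    ← image_div_add_Ioi hx, integral_image_eq_integral_abs_deriv_smul measurableSet_Ioi
      (fun y hy => (hasDerivAt_div_add (add_pos hy hx).ne').hasDerivWithinAt)
      (injOn_div_add_Ioi hx),
    setIntegral_congr_fun measurableSet_Ioi
      (fun y hy => abs_deriv_smul_betaIntegrand_div_add hx u v hy),
    integral_const_mul, cpow_neg, inv_mul_cancel_left₀ hxv]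

lemma integrableOn_Ioi_cpow_div_add_cpow (hx : 0 < x) {u v : ℂ} (hu : 0 < u.re) (hv : 0 < v.re) :
    IntegrableOn (fun y : ℝ => (y : ℂ) ^ (u - 1) / ((y : ℂ) + x) ^ (u + v)) (Set.Ioi 0) := by
  have hxv : (x : ℂ) ^ v ≠ 0 := by simp [cpow_eq_zero_iff, hx.ne']
  have hbeta := (intervalIntegrable_iff_integrableOn_Ioo_of_le zero_le_one).1
    (betaIntegral_convergent hu hv)
  rw [← image_div_add_Ioi hx, integrableOn_image_iff_integrableOn_abs_deriv_smul measurableSet_Ioi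
      (fun y hy => (hasDerivAt_div_add (add_pos hy hx).ne').hasDerivWithinAt)
      (injOn_div_add_Ioi hx),
    integrableOn_congr_fun
      (fun y (hy : y ∈ Set.Ioi 0) => abs_deriv_smul_betaIntegrand_div_add hx u v hy)
      measurableSet_Ioi] at hbeta
  exact (integrable_const_mul_iff hxv.isUnit _).1 hbeta

lemma betaIntegral_one_add_one_sub {s : ℂ} (hs : -1 < s.re) (hs' : s.re < 1) (hs0 : s ≠ 0) :
    betaIntegral (1 + s) (1 - s) = Real.pi * s / sin (Real.pi * s) := by
  rw [betaIntegral_eq_Gamma_mul_div _ _ (by rw [add_re, one_re]; linarith)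
      (by rw [sub_re, one_re]; linarith),
    show (1 : ℂ) + s + (1 - s) = (1 : ℕ) + 1 by push_cast; ring, Gamma_nat_eq_factorial,
    add_comm, Gamma_add_one s hs0, mul_assoc, Gamma_mul_Gamma_one_sub]
  simp only [Nat.factorial_one, Nat.cast_one, div_one]
  ring

lemma integral_Ioi_cpow_div_add_sq (hx : 0 < x) {s : ℂ} (hs : -1 < s.re) (hs' : s.re < 1)
    (hs0 : s ≠ 0) :
    ∫ y in Set.Ioi (0 : ℝ), (y : ℂ) ^ s / ((y : ℂ) + x) ^ 2 =
      (x : ℂ) ^ (s - 1) * (Real.pi * s / sin (Real.pi * s)) := by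
  have h := integral_Ioi_cpow_div_add_cpow hx (1 + s) (1 - s)
  rw [betaIntegral_one_add_one_sub hs hs' hs0] at h
  simpa [show (1 : ℂ) + s + (1 - s) = 2 by ring] using h

lemma integrableOn_Ioi_cpow_div_add_sq (hx : 0 < x) {s : ℂ} (hs : -1 < s.re) (hs' : s.re < 1) :
    IntegrableOn (fun y : ℝ => (y : ℂ) ^ s / ((y : ℂ) + x) ^ 2) (Set.Ioi 0) := by
  have h := integrableOn_Ioi_cpow_div_add_cpow hx (u := 1 + s) (v := 1 - s)
    (by rw [add_re, one_re]; linarith) (by rw [sub_re, one_re]; linarith)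
  simpa [show (1 : ℂ) + s + (1 - s) = 2 by ring] using h

end BetaIntegral

lemma hasSum_cpow_div_add_pow (s : ℂ) {z : ℂ} (n : ℕ) {y : ℝ} (hy : 0 < y) (hz : ‖z‖ < y) :
    HasSum (fun j : ℕ => ((j + n).choose n : ℂ) * (-z) ^ j * (y : ℂ) ^ (s - (n + 1) - j))
      ((y : ℂ) ^ s / ((y : ℂ) + z) ^ (n + 1)) := by
  have hyc : (y : ℂ) ≠ 0 := ofReal_ne_zero.2 hy.ne'
  have hnorm : ‖-z / y‖ < 1 := by
    rwa [norm_div, norm_neg, norm_real, Real.norm_of_nonneg hy.le, div_lt_one hy]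
  have hyz : (y : ℂ) + z = y * (1 - -z / y) := by field_simp; ring
  convert! (hasSum_choose_mul_geometric_of_norm_lt_one n hnorm).mul_left
    ((y : ℂ) ^ (s - (n + 1))) using 1
  · funext j
    rw [cpow_sub _ _ hyc, cpow_natCast, div_pow]
    ring
  · rw [hyz, mul_pow, cpow_sub _ _ hyc, ← Nat.cast_succ, cpow_natCast, mul_one_div, div_div]

lemma norm_choose_mul_pow_mul_cpow_le (s z : ℂ) (n j : ℕ) {y : ℝ} (hy : 1 ≤ y) :
    ‖((j + n).choose n : ℂ) * (-z) ^ j * (y : ℂ) ^ (s - (n + 1) - j)‖ ≤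
      ((j + n).choose n : ℝ) * ‖z‖ ^ j * y ^ (s.re - (n + 1)) := by
  rw [norm_mul, norm_mul, norm_pow, norm_neg, norm_natCast,
    norm_cpow_eq_rpow_re_of_pos (by linarith)]
  gcongr
  simp

lemma hasSum_integral_Ioi_one_cpow_div_add_pow {s z : ℂ} (n : ℕ) (hs : s.re < n)
    (hz : ‖z‖ < 1) :
    HasSum (fun j : ℕ => ((j + n).choose n : ℂ) * (-z) ^ j / (j + n - s))
      (∫ y in Set.Ioi (1 : ℝ), (y : ℂ) ^ s / ((y : ℂ) + z) ^ (n + 1)) := by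
  have hre (j : ℕ) : (s - (n + 1) - j).re < -1 := by
    simp only [sub_re, add_re, natCast_re, one_re]
    linarith [(Nat.cast_nonneg j : (0 : ℝ) ≤ j)]
  have hsum : Summable fun j : ℕ => ((j + n).choose n : ℝ) * ‖z‖ ^ j :=
    summable_choose_mul_geometric_of_norm_lt_one n (by rwa [norm_norm])
  have hint : Integrable (fun y : ℝ => ∑' j : ℕ, ((j + n).choose n : ℝ) * ‖z‖ ^ j *
      y ^ (s.re - (n + 1))) (volume.restrict (Set.Ioi 1)) := by
    simp only [tsum_mul_right]
    exact (integrableOn_Ioi_rpow_of_lt (by linarith) one_pos).const_mul _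
  have hterms := hasSum_integral_of_dominated_convergence
    (fun j y => ((j + n).choose n : ℝ) * ‖z‖ ^ j * y ^ (s.re - (n + 1)))
    (fun j => ((integrableOn_Ioi_cpow_of_lt (hre j) one_pos).const_mul _).aestronglyMeasurable)
    (fun j => (ae_restrict_iff' measurableSet_Ioi).2 <| .of_forall fun y hy =>
      norm_choose_mul_pow_mul_cpow_le s z n j (le_of_lt hy))
    (.of_forall fun y => hsum.mul_right _) hint
    ((ae_restrict_iff' measurableSet_Ioi).2 <| .of_forall fun y hy =>
      hasSum_cpow_div_add_pow s n (one_pos.trans hy) (hz.trans hy))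
  convert! hterms using 2 with j
  rw [integral_const_mul, integral_Ioi_cpow_of_lt (hre j) one_pos, ofReal_one, one_cpow,
    neg_div, ← div_neg, mul_one_div]
  ring_nf

lemma hasSum_pow_div_sub {s z Q : ℂ} (hz : ‖z‖ < 1) (hs : ∀ j : ℕ, s ≠ j)
    (hQ : HasSum (fun j : ℕ => ((j : ℂ) + 1) * z ^ j / (j + 1 - s)) Q) :
    HasSum (fun j : ℕ => z ^ j / (s - j)) (((1 - z)⁻¹ - z * Q) / s) := by
  have hshift : HasSum (fun j : ℕ => (j : ℂ) * z ^ j / (j - s)) (z * Q) := by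
    rw [← hasSum_nat_add_iff' 1]
    convert! hQ.mul_left z using 1
    · funext j
      push_cast
      ring
    · simp
  have hs0 : s ≠ 0 := by simpa using hs 0
  convert! ((hasSum_geometric_of_norm_lt_one hz).sub hshift).div_const s using 1
  funext j
  have hsj : s - j ≠ 0 := sub_ne_zero.2 (hs j)
  rw [← neg_sub s (j : ℂ)]
  field_simp
  ring

section IntegrationByParts

variable {s z : ℂ}

lemma ofReal_add_ne_zero_of_mem_slitPlane (hz : z ∈ slitPlane) {y : ℝ} (hy : 0 ≤ y) :
    (y : ℂ) + z ≠ 0 := by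
  intro h
  rw [← neg_eq_of_add_eq_zero_right h, neg_ofReal_mem_slitPlane] at hz
  exact hy.not_gt hz

lemma intervalIntegrable_cpow_div_add_pow (hs : -1 < s.re) (hz : z ∈ slitPlane) (n : ℕ) :
    IntervalIntegrable (fun y : ℝ => (y : ℂ) ^ s / ((y : ℂ) + z) ^ n) volume 0 1 := by
  simp only [div_eq_mul_inv]
  refine (intervalIntegral.intervalIntegrable_cpow' hs).mul_continuousOn ?_
  refine ContinuousOn.inv₀ (by fun_prop) fun y hy => pow_ne_zero _ ?_
  rw [Set.uIcc_of_le zero_le_one] at hy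
  exact ofReal_add_ne_zero_of_mem_slitPlane hz hy.1

lemma hasDerivAt_cpow_add_one_div_add (hs : s + 1 ≠ 0) {y : ℝ} (hy : y ≠ 0)
    (hyz : (y : ℂ) + z ≠ 0) :
    HasDerivAt (fun y : ℝ => (y : ℂ) ^ (s + 1) / ((y : ℂ) + z))
      (s * ((y : ℂ) ^ s / ((y : ℂ) + z)) + z * ((y : ℂ) ^ s / ((y : ℂ) + z) ^ 2)) y := by
  convert! (hasDerivAt_ofReal_cpow_const hy hs).div
    ((ofRealCLM.hasDerivAt (x := y)).add_const z) hyz using 1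
  simp only [ofRealCLM_apply, ofReal_one, add_sub_cancel_right]
  rw [cpow_add _ _ (ofReal_ne_zero.2 hy), cpow_one]
  field_simp
  ring

lemma mul_integral_cpow_div_add (hs : -1 < s.re) (hz : z ∈ slitPlane) :
    s * (∫ y in (0 : ℝ)..1, (y : ℂ) ^ s / ((y : ℂ) + z)) =
      1 / (1 + z) - z * ∫ y in (0 : ℝ)..1, (y : ℂ) ^ s / ((y : ℂ) + z) ^ 2 := by
  have hs1 : 0 < (s + 1).re := by simp only [add_re, one_re]; linarith
  have hs1' : s + 1 ≠ 0 := fun h => by simp [h] at hs1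
  have hne {y : ℝ} (hy : 0 ≤ y) := ofReal_add_ne_zero_of_mem_slitPlane hz hy
  have hint₁ : IntervalIntegrable (fun y : ℝ => (y : ℂ) ^ s / ((y : ℂ) + z)) volume 0 1 := by
    simpa using intervalIntegrable_cpow_div_add_pow hs hz 1
  have hint₂ := intervalIntegrable_cpow_div_add_pow hs hz 2
  have hcont : ContinuousOn (fun y : ℝ => (y : ℂ) ^ (s + 1) / ((y : ℂ) + z)) (Set.Icc 0 1) :=
    (continuous_ofReal_cpow_const hs1).continuousOn.div (by fun_prop) fun y hy => hne hy.1
  have hftc := intervalIntegral.integral_eq_sub_of_hasDerivAt_of_le zero_le_one hcont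
    (fun y hy => hasDerivAt_cpow_add_one_div_add hs1' hy.1.ne' (hne hy.1.le))
    ((hint₁.const_mul s).add (hint₂.const_mul z))
  rw [intervalIntegral.integral_add (hint₁.const_mul s) (hint₂.const_mul z),
    intervalIntegral.integral_const_mul, intervalIntegral.integral_const_mul] at hftc
  rw [eq_sub_iff_add_eq, hftc]
  simp [zero_cpow hs1']

end IntegrationByParts

theorem hasSum_neg_pow_div_sub_integral_cpow_div_add {x : ℝ} (hx0 : 0 < x) (hx1 : x < 1) {s : ℂ}
    (hs : -1 < s.re) (hs' : s.re < 1) (hs0 : s ≠ 0) :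
    HasSum (fun j : ℕ => (-x : ℂ) ^ j / (s - j))
      ((∫ y in (0 : ℝ)..1, (y : ℂ) ^ s / ((y : ℂ) + x)) +
        Real.pi * (x : ℂ) ^ s / sin (Real.pi * s)) := by
  have hxc : (x : ℂ) ≠ 0 := ofReal_ne_zero.2 hx0.ne'
  have hx : ‖(x : ℂ)‖ < 1 := by rwa [norm_real, Real.norm_of_nonneg hx0.le]
  have hsj (j : ℕ) : s ≠ j := by
    rintro rfl
    rw [natCast_re, Nat.cast_lt_one] at hs'
    exact hs0 (by simp [hs'])
  have htail : HasSum (fun j : ℕ => ((j : ℂ) + 1) * (-x) ^ j / (j + 1 - s))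
      (∫ y in Set.Ioi (1 : ℝ), (y : ℂ) ^ s / ((y : ℂ) + x) ^ 2) := by
    simpa using hasSum_integral_Ioi_one_cpow_div_add_pow 1 (by simpa using hs') hx
  have hint := integrableOn_Ioi_cpow_div_add_sq hx0 hs hs'
  have hsplit := intervalIntegral.integral_interval_add_Ioi hint
    (hint.mono_set (Set.Ioi_subset_Ioi zero_le_one))
  rw [integral_Ioi_cpow_div_add_sq hx0 hs hs' hs0] at hsplit
  have hparts := mul_integral_cpow_div_add hs (ofReal_mem_slitPlane.2 hx0)
  convert! hasSum_pow_div_sub (by rwa [norm_neg]) hsj htail using 1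
  rw [eq_div_iff hs0, mul_comm, mul_add, hparts, eq_sub_of_add_eq hsplit,
    cpow_sub _ _ hxc, cpow_one]
  field_simp
  ring

theorem singular_integral_M_series_general {x : ℝ} (hx0 : 0 < x) (hx1 : x < 1) {s : ℂ}
    (hs : -1 < s.re) (hs' : s.re < 1) (hs0 : s ≠ 0) :
    Summable (fun j : ℕ => ‖(-1 : ℂ) ^ j * (x : ℂ) ^ j / (s - j)‖) ∧
    ∫ y in (0 : ℝ)..1, (y : ℂ) ^ s / ((y : ℂ) + x) =
      -(Real.pi * (x : ℂ) ^ s / sin (Real.pi * s)) +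
        ∑' j : ℕ, (-1 : ℂ) ^ j * (x : ℂ) ^ j / (s - j) := by
  simp only [← mul_pow, neg_one_mul]
  have h := hasSum_neg_pow_div_sub_integral_cpow_div_add hx0 hx1 hs hs' hs0
  exact ⟨h.summable.norm, by rw [h.tsum_eq]; ring⟩

lemma sin_pi_mul_I_mul (δ : ℝ) :
    sin (Real.pi * (I * δ)) = (Real.sinh (Real.pi * δ) : ℂ) * I := by
  rw [mul_left_comm, mul_comm, sin_mul_I, ofReal_sinh, ofReal_mul]

theorem singular_integral_M_series (x δ : ℝ) (hx0 : 0 < x) (hx1 : x < 1) (hδ : δ ≠ 0) :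
    Summable (fun j : ℕ => ‖(-1 : ℂ) ^ j * (x : ℂ) ^ j / (Complex.I * (δ : ℂ) - (j : ℂ))‖) ∧
    ∫ y in (0 : ℝ)..1, (y : ℂ) ^ (Complex.I * (δ : ℂ)) / ((y : ℂ) + (x : ℂ))
      = ↑Real.pi * Complex.I * (x : ℂ) ^ (Complex.I * (δ : ℂ)) / (Real.sinh (Real.pi * δ) : ℂ)
        + ∑' j : ℕ, (-1 : ℂ) ^ j * (x : ℂ) ^ j / (Complex.I * (δ : ℂ) - (j : ℂ)) := by
  have h := singular_integral_M_series_general hx0 hx1 (s := I * δ) (by simp) (by simp) (by simpa)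
  rwa [sin_pi_mul_I_mul, ← div_div, div_I, neg_neg, div_mul_eq_mul_div, mul_right_comm] at h
end
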